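/- Let N be a finite set, P : N × N → [0,1] a row-stochastic matrix (Σ_{j∈N} P(i,j) = 1 for all i), μ a probability distribution on N, and let 0 ≤ t < T be integers. Consider the Markov path pmf on N^{T+1} given by p(x_0,…,x_T) = μ(x_0)·∏_{i=0}^{T−1} P(x_i, x_{i+1}). Let f : {0,…,t} → {ON, OFF} with f(0) = ON, let τ(i) = max{ j ≤ i : f(j) = ON }, and let B = { i ∈ {0,…,t} : f(i) = ON } ∪ {t+1, …, T}. Let 𝒬_0,…,𝒬_t be finite sets and for each i let w_i assign to each triple (a,b,c) ∈ N³ a probability distribution w_i(·|a,b,c) on 𝒬_i. Define the joint pmf of (X_0,…,X_T,Q_0,…,Q_t) by Pr(x, q_0,…,q_t) = p(x)·∏_{i=0}^{t} w_i(q_i | x_{τ(i)}, x_i, x_{i+1}). If for every i ∈ {0,…,t} the random variable Q_i is independent of U_i := (X_{τ(i)}, X_{i+1}) under this joint law, then the tuple (Q_0,…,Q_t) is independent of the tuple (X_j : j ∈ B). (Finite-horizon form of Lemma 1 of the paper.) -/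

import Mathlib

open Finset


def mixAt {ι N : Type*} (I : ι → Prop) [DecidablePred I] (x y : ι → N) : ι → N :=
  fun j => if I j then y j else x j

theorem mixAt_mixAt {ι N : Type*} (I : ι → Prop) [DecidablePred I] (x y : ι → N) :
    mixAt I (mixAt I x y) (mixAt I y x) = x := by
  funext j; unfold mixAt; split_ifs <;> rfl

def swapEquiv {ι N : Type*} (I : ι → Prop) [DecidablePred I] :
    ((ι → N) × (ι → N)) ≃ ((ι → N) × (ι → N)) where
  toFun z := (mixAt I z.1 z.2, mixAt I z.2 z.1)
  invFun z := (mixAt I z.1 z.2, mixAt I z.2 z.1)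
  left_inv z := by simp [mixAt_mixAt]
  right_inv z := by simp [mixAt_mixAt]

/-- Swap argument: replace `w` by its constant conditional mean. -/
theorem swap_step {ι N : Type*} [Fintype ι] [DecidableEq ι] [Fintype N] [DecidableEq N]
    (I : ι → Prop) [DecidablePred I] (u v : ι) (hu : ¬ I u) (hv : ¬ I v)
    (p G w : (ι → N) → ℝ) (r : ℝ) (hp0 : ∀ x, 0 ≤ p x)
    (hsw : ∀ x y, x u = y u → x v = y v → p x * p y = p (mixAt I x y) * p (mixAt I y x))
    (hG : ∀ x y, G (mixAt I x y) = G x)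
    (hw : ∀ x y, x u = y u → x v = y v → w (mixAt I y x) = w x)
    (hind : ∀ a b, (∑ x, if x u = a ∧ x v = b then p x * w x else 0)
      = (∑ x, if x u = a ∧ x v = b then p x else 0) * r) :
    ∑ x, p x * (G x * w x) = ∑ x, p x * (G x * r) := by
  have split : ∀ F : (ι → N) → ℝ,
      ∑ x, F x = ∑ a, ∑ b, ∑ x, if x u = a ∧ x v = b then F x else 0 := by
    intro F
    have : ∀ x, F x = ∑ a, ∑ b, if x u = a ∧ x v = b then F x else 0 := by
      intro x
      simp [ite_and]
    rw [Finset.sum_congr rfl (fun x _ => this x), Finset.sum_comm]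
    refine Finset.sum_congr rfl fun a _ => ?_
    rw [Finset.sum_comm]
  rw [split, split]
  refine Finset.sum_congr rfl fun a _ => Finset.sum_congr rfl fun b _ => ?_
  set Z := ∑ x, if x u = a ∧ x v = b then p x else 0 with hZ
  have key : (∑ x, if x u = a ∧ x v = b then p x * (G x * w x) else 0) * Z
      = (∑ x, if x u = a ∧ x v = b then p x * G x else 0)
        * (∑ x, if x u = a ∧ x v = b then p x * w x else 0) := by
    rw [hZ, Finset.sum_mul_sum, Finset.sum_mul_sum, ← Fintype.sum_prod_type',
      ← Fintype.sum_prod_type']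
    refine Fintype.sum_equiv (swapEquiv I) _ _ ?_
    rintro ⟨x, y⟩
    have e1 : mixAt I x y u = x u := by simp [mixAt, hu]
    have e2 : mixAt I x y v = x v := by simp [mixAt, hv]
    have e3 : mixAt I y x u = y u := by simp [mixAt, hu]
    have e4 : mixAt I y x v = y v := by simp [mixAt, hv]
    simp only [swapEquiv, Equiv.coe_fn_mk, e1, e2, e3, e4]
    by_cases hx : x u = a ∧ x v = b
    · by_cases hy : y u = a ∧ y v = b
      · have h1 : x u = y u := by rw [hx.1, hy.1]
        have h2 : x v = y v := by rw [hx.2, hy.2]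
        rw [if_pos hx, if_pos hy, if_pos hx, if_pos hy, hG, hw x y h1 h2]
        linear_combination (G x * w x) * hsw x y h1 h2
      · simp [hy]
    · simp [hx]
  rw [hind] at key
  by_cases h0 : Z = 0
  · have hz : ∀ x, x u = a ∧ x v = b → p x = 0 := by
      intro x hx
      have := (Finset.sum_eq_zero_iff_of_nonneg (s := Finset.univ)
        (f := fun x : ι → N => if x u = a ∧ x v = b then p x else 0)
        (fun x _ => by split_ifs; exacts [hp0 x, le_rfl])).1 (hZ ▸ h0) x
          (Finset.mem_univ _)
      simpa [hx] using this
    refine Finset.sum_congr rfl fun x _ => ?_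
    split_ifs with hx
    · simp [hz x hx]
    · rfl
  · have : (∑ x, if x u = a ∧ x v = b then p x * (G x * r) else 0)
        = (∑ x, if x u = a ∧ x v = b then p x * G x else 0) * r := by
      rw [Finset.sum_mul]
      refine Finset.sum_congr rfl fun x _ => ?_
      split_ifs <;> ring
    rw [this]
    apply mul_right_cancel₀ h0
    rw [key]; ring

theorem sum_pi_one {n : ℕ} (Q : Fin n → Type*) [∀ i, Fintype (Q i)]
    (g : ∀ i, Q i → ℝ) : ∑ q : (∀ i, Q i), ∏ i, g i (q i) = ∏ i, ∑ r, g i r := by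
  classical
  rw [Finset.prod_univ_sum, Fintype.piFinset_univ]

theorem sum_pi_ind {n : ℕ} (Q : Fin n → Type*) [∀ i, Fintype (Q i)] [∀ i, DecidableEq (Q i)]
    (g : ∀ i, Q i → ℝ) (h1 : ∀ i, ∑ r, g i r = 1) (i : Fin n) (qv : ∀ i, Q i) :
    (∑ q : (∀ j, Q j), if q i = qv i then ∏ j, g j (q j) else 0) = g i (qv i) := by
  have h := sum_pi_one Q (fun j r => if j = i then (if r = qv j then g j r else 0) else g j r)
  have h2 : ∀ j, (∑ r, if j = i then (if r = qv j then g j r else 0) else g j r)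
      = if j = i then g j (qv j) else 1 := by
    intro j
    by_cases hj : j = i
    · simp [hj]
    · simp [hj, h1]
  simp only [h2] at h
  rw [Finset.prod_ite_eq' Finset.univ i (fun j => g j (qv j))] at h
  simp only [Finset.mem_univ, if_true] at h
  rw [← h]
  refine Finset.sum_congr rfl fun q _ => ?_
  by_cases hq : q i = qv i
  · rw [if_pos hq]
    refine Finset.prod_congr rfl fun j _ => ?_
    by_cases hj : j = i
    · subst hj; simp [hq]
    · simp [hj]
  · rw [if_neg hq, eq_comm]
    exact Finset.prod_eq_zero (Finset.mem_univ i) (by simp [hq])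

theorem markov_swap {N : Type*} (P : N → N → ℝ) (μ : N → ℝ) (T : ℕ)
    (p : (Fin (T + 1) → N) → ℝ)
    (hp : ∀ x, p x = μ (x 0) * ∏ i : Fin T, P (x i.castSucc) (x i.succ))
    (a s : ℕ) (ha : a < T + 1) (hs : s + 1 < T + 1)
    (x y : Fin (T + 1) → N) (hx : x ⟨a, ha⟩ = y ⟨a, ha⟩)
    (hy : x ⟨s + 1, hs⟩ = y ⟨s + 1, hs⟩) :
    p x * p y = p (mixAt (fun j : Fin (T + 1) => a < j.val ∧ j.val ≤ s) x y)
      * p (mixAt (fun j : Fin (T + 1) => a < j.val ∧ j.val ≤ s) y x) := by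
  have h : ∀ i : Fin T, P (x i.castSucc) (x i.succ) * P (y i.castSucc) (y i.succ)
      = P (mixAt (fun j : Fin (T + 1) => a < j.val ∧ j.val ≤ s) x y i.castSucc)
          (mixAt (fun j : Fin (T + 1) => a < j.val ∧ j.val ≤ s) x y i.succ)
        * P (mixAt (fun j : Fin (T + 1) => a < j.val ∧ j.val ≤ s) y x i.castSucc)
          (mixAt (fun j : Fin (T + 1) => a < j.val ∧ j.val ≤ s) y x i.succ) := by
    intro i
    unfold mixAt
    simp only [Fin.val_castSucc, Fin.val_succ]
    by_cases h1 : a < i.val ∧ i.val ≤ s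
    · by_cases h2 : a < i.val + 1 ∧ i.val + 1 ≤ s
      · simp only [h1, h2, and_self, if_true]; ring
      · have e : i.succ = ⟨s + 1, hs⟩ := by
          apply Fin.ext; simp; omega
        rw [if_pos h1, if_neg h2, if_pos h1, if_neg h2, e, hy]; ring
    · by_cases h2 : a < i.val + 1 ∧ i.val + 1 ≤ s
      · have e : i.castSucc = ⟨a, ha⟩ := by
          apply Fin.ext; simp; omega
        rw [if_neg h1, if_pos h2, if_neg h1, if_pos h2, e, hx]; ring
      · rw [if_neg h1, if_neg h2, if_neg h1, if_neg h2]
  have h' := Finset.prod_congr (rfl : (Finset.univ : Finset (Fin T)) = Finset.univ)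
    (fun i _ => h i)
  rw [Finset.prod_mul_distrib, Finset.prod_mul_distrib] at h'
  have m : ∀ z z' : Fin (T + 1) → N,
      mixAt (fun j : Fin (T + 1) => a < j.val ∧ j.val ≤ s) z z' 0 = z 0 := by
    intro z z'; simp [mixAt]
  rw [hp, hp, hp, hp, m, m]
  linear_combination (μ (x 0) * μ (y 0)) * h'

/-- **Finite-horizon form of Lemma 1.** For the Markov path pmf and queries generated as
probabilistic functions of `(X_{τ(i)}, X_i, X_{i+1})` with fresh randomness, if each `Q_i`
is independent of `U_i = (X_{τ(i)}, X_{i+1})`, then `(Q_0,…,Q_t)` is independent of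
`(X_j : j ∈ B)`, where `B = {i ≤ t : f(i) = ON} ∪ {t+1,…,T}`. -/
theorem lemma_one {N : Type*} [Fintype N] [DecidableEq N]
    (P : N → N → ℝ) (hP0 : ∀ i j, 0 ≤ P i j) (hP1 : ∀ i, ∑ j, P i j = 1)
    (μ : N → ℝ) (hμ0 : ∀ i, 0 ≤ μ i) (hμ1 : ∑ i, μ i = 1)
    (t T : ℕ) (htT : t < T)
    (f : ℕ → Bool) (hf0 : f 0 = true)
    (τ : ℕ → ℕ)
    (hτ : ∀ i, i ≤ t → τ i ≤ i ∧ f (τ i) = true ∧ ∀ j, τ i < j → j ≤ i → f j = false)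
    (Q : Fin (t + 1) → Type*) [∀ i, Fintype (Q i)] [∀ i, DecidableEq (Q i)]
    (w : (i : Fin (t + 1)) → N → N → N → Q i → ℝ)
    (hw0 : ∀ i a b c q, 0 ≤ w i a b c q)
    (hw1 : ∀ i a b c, ∑ q, w i a b c q = 1)
    (p : (Fin (T + 1) → N) → ℝ)
    (hp : ∀ x, p x = μ (x 0) * ∏ i : Fin T, P (x i.castSucc) (x i.succ))
    (Pr : (Fin (T + 1) → N) → ((i : Fin (t + 1)) → Q i) → ℝ)
    (hPr : ∀ x q, Pr x q = p x * ∏ i : Fin (t + 1),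
      w i (x ⟨τ i.val, by
              have h1 := i.isLt
              have h2 := (hτ i.val (by omega)).1
              omega⟩)
          (x ⟨i.val, by have h1 := i.isLt; omega⟩)
          (x ⟨i.val + 1, by have h1 := i.isLt; omega⟩)
          (q i))
    (hindep : ∀ (i : Fin (t + 1)) (a b : N) (qi : Q i),
      (∑ x : Fin (T + 1) → N, ∑ q : (∀ j, Q j),
        if x ⟨τ i.val, by
              have h1 := i.isLt
              have h2 := (hτ i.val (by omega)).1
              omega⟩ = a
            ∧ x ⟨i.val + 1, by have h1 := i.isLt; omega⟩ = b ∧ q i = qi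
        then Pr x q else 0)
      = (∑ x : Fin (T + 1) → N, ∑ q : (∀ j, Q j),
          if x ⟨τ i.val, by
                have h1 := i.isLt
                have h2 := (hτ i.val (by omega)).1
                omega⟩ = a
              ∧ x ⟨i.val + 1, by have h1 := i.isLt; omega⟩ = b
          then Pr x q else 0)
        * (∑ x : Fin (T + 1) → N, ∑ q : (∀ j, Q j), if q i = qi then Pr x q else 0)) :
    ∀ (qv : (i : Fin (t + 1)) → Q i) (xv : Fin (T + 1) → N),
      (∑ x : Fin (T + 1) → N, ∑ q : (∀ j, Q j),
        if (∀ j : Fin (T + 1), ((j.val ≤ t ∧ f j.val = true) ∨ t + 1 ≤ j.val) → x j = xv j)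
            ∧ q = qv
        then Pr x q else 0)
      = (∑ x : Fin (T + 1) → N, ∑ q : (∀ j, Q j),
          if (∀ j : Fin (T + 1), ((j.val ≤ t ∧ f j.val = true) ∨ t + 1 ≤ j.val) → x j = xv j)
          then Pr x q else 0)
        * (∑ x : Fin (T + 1) → N, ∑ q : (∀ j, Q j), if q = qv then Pr x q else 0) := by
  intro qv xv
  have hτT : ∀ i : Fin (t + 1), τ i.val < T + 1 := fun i => by
    have h1 := i.isLt
    have h2 := (hτ i.val (by omega)).1
    omega
  have hiT : ∀ i : Fin (t + 1), i.val < T + 1 := fun i => by have h1 := i.isLt; omega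
  have hsT : ∀ i : Fin (t + 1), i.val + 1 < T + 1 := fun i => by have h1 := i.isLt; omega
  let V : (x : Fin (T + 1) → N) → (i : Fin (t + 1)) → Q i → ℝ := fun x i r =>
    w i (x ⟨τ i.val, hτT i⟩) (x ⟨i.val, hiT i⟩) (x ⟨i.val + 1, hsT i⟩) r
  have hV1 : ∀ x i, ∑ r, V x i r = 1 := fun x i => hw1 _ _ _ _
  have hPr' : ∀ x q, Pr x q = p x * ∏ i, V x i (q i) := hPr
  have hp0 : ∀ x, 0 ≤ p x := by
    intro x
    rw [hp]
    exact mul_nonneg (hμ0 _) (Finset.prod_nonneg fun i _ => hP0 _ _)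
  -- marginalisations over the queries
  have m1 : ∀ x, ∑ q, Pr x q = p x := by
    intro x
    simp only [hPr']
    rw [← Finset.mul_sum, sum_pi_one Q (V x)]
    simp [hV1]
  have m2 : ∀ x i, (∑ q, if q i = qv i then Pr x q else 0) = p x * V x i (qv i) := by
    intro x i
    rw [← sum_pi_ind Q (V x) (hV1 x) i qv, Finset.mul_sum]
    refine Finset.sum_congr rfl fun q _ => ?_
    rw [hPr']; split_ifs <;> simp
  have m3 : ∀ x, (∑ q, if q = qv then Pr x q else 0) = p x * ∏ i, V x i (qv i) := by
    intro x
    simp [hPr']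
  let r : Fin (t + 1) → ℝ := fun i => ∑ x, p x * V x i (qv i)
  have hind : ∀ (i : Fin (t + 1)) (a b : N),
      (∑ x : Fin (T + 1) → N, if x ⟨τ i.val, hτT i⟩ = a ∧ x ⟨i.val + 1, hsT i⟩ = b
        then p x * V x i (qv i) else 0)
      = (∑ x : Fin (T + 1) → N, if x ⟨τ i.val, hτT i⟩ = a ∧ x ⟨i.val + 1, hsT i⟩ = b
        then p x else 0) * r i := by
    intro i a b
    have h := hindep i a b (qv i)
    have e1 : (∑ x : Fin (T + 1) → N, ∑ q : (∀ j, Q j),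
        if x ⟨τ i.val, hτT i⟩ = a ∧ x ⟨i.val + 1, hsT i⟩ = b ∧ q i = qv i
        then Pr x q else 0) = (∑ x : Fin (T + 1) → N,
        if x ⟨τ i.val, hτT i⟩ = a ∧ x ⟨i.val + 1, hsT i⟩ = b
        then p x * V x i (qv i) else 0) := by
      refine Finset.sum_congr rfl fun x _ => ?_
      by_cases hx : x ⟨τ i.val, hτT i⟩ = a ∧ x ⟨i.val + 1, hsT i⟩ = b
      · rw [if_pos hx, ← m2]
        refine Finset.sum_congr rfl fun q _ => ?_
        simp only [hx, true_and]
      · rw [if_neg hx]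
        refine Finset.sum_eq_zero fun q _ => ?_
        rw [if_neg (fun h => hx ⟨h.1, h.2.1⟩)]
    have e2 : (∑ x : Fin (T + 1) → N, ∑ q : (∀ j, Q j),
        if x ⟨τ i.val, hτT i⟩ = a ∧ x ⟨i.val + 1, hsT i⟩ = b
        then Pr x q else 0) = (∑ x : Fin (T + 1) → N,
        if x ⟨τ i.val, hτT i⟩ = a ∧ x ⟨i.val + 1, hsT i⟩ = b
        then p x else 0) := by
      refine Finset.sum_congr rfl fun x _ => ?_
      split_ifs
      · exact m1 x
      · simp
    have e3 : (∑ x : Fin (T + 1) → N, ∑ q : (∀ j, Q j),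
        if q i = qv i then Pr x q else 0) = r i :=
      Finset.sum_congr rfl fun x _ => m2 x i
    rw [← e1, ← e2, ← e3]
    exact h
  -- one replacement step
  have step : ∀ (i : Fin (t + 1)) (G : (Fin (T + 1) → N) → ℝ),
      (∀ x y, G (mixAt (fun j : Fin (T + 1) => τ i.val < j.val ∧ j.val ≤ i.val) x y) = G x) →
      ∑ x, p x * (G x * V x i (qv i)) = ∑ x, p x * (G x * r i) := by
    intro i G hG
    refine swap_step (fun j : Fin (T + 1) => τ i.val < j.val ∧ j.val ≤ i.val)
      ⟨τ i.val, hτT i⟩ ⟨i.val + 1, hsT i⟩ (by simp) (by simp) p G (fun x => V x i (qv i)) (r i)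
      hp0 (fun x y => markov_swap P μ T p hp _ _ (hτT i) (hsT i) x y) hG ?_ (hind i)
    intro x y h1 h2
    have hle := (hτ i.val (by have := i.isLt; omega)).1
    have e1 : mixAt (fun j : Fin (T + 1) => τ i.val < j.val ∧ j.val ≤ i.val) y x
        ⟨τ i.val, hτT i⟩ = x ⟨τ i.val, hτT i⟩ := by simp [mixAt, h1]
    have e2 : mixAt (fun j : Fin (T + 1) => τ i.val < j.val ∧ j.val ≤ i.val) y x
        ⟨i.val + 1, hsT i⟩ = x ⟨i.val + 1, hsT i⟩ := by simp [mixAt, h2]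
    have e3 : mixAt (fun j : Fin (T + 1) => τ i.val < j.val ∧ j.val ≤ i.val) y x
        ⟨i.val, hiT i⟩ = x ⟨i.val, hiT i⟩ := by
      by_cases h : τ i.val < i.val
      · simp [mixAt, h]
      · have h' : (⟨i.val, hiT i⟩ : Fin (T + 1)) = ⟨τ i.val, hτT i⟩ := by
          apply Fin.ext; simp; omega
        rw [h', e1]
    simp only [V, e1, e2, e3]
  -- the full replacement
  have main : ∀ c : (Fin (T + 1) → N) → ℝ,
      (∀ x y : Fin (T + 1) → N, (∀ j : Fin (T + 1),
        ((j.val ≤ t ∧ f j.val = true) ∨ t + 1 ≤ j.val) → x j = y j) → c x = c y) →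
      ∑ x, p x * (c x * ∏ i, V x i (qv i)) = ∑ x, p x * (c x * ∏ i, r i) := by
    intro c hc
    have hyb : ∀ s, s ≤ t + 1 → ∑ x, p x * (c x * ∏ i, V x i (qv i))
        = ∑ x, p x * (c x * ∏ i : Fin (t + 1), if i.val < s then r i else V x i (qv i)) := by
      intro s
      induction s with
      | zero => intro _; simp
      | succ s ih =>
        intro hs
        rw [ih (by omega)]
        let i : Fin (t + 1) := ⟨s, by omega⟩
        let G : (Fin (T + 1) → N) → ℝ := fun x =>
          c x * ∏ k ∈ Finset.univ.erase i, if k.val < s then r k else V x k (qv k)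
        have hfalse : ∀ j, τ s < j → j ≤ s → f j = false := (hτ s (by omega)).2.2
        have hG : ∀ x y,
            G (mixAt (fun j : Fin (T + 1) => τ i.val < j.val ∧ j.val ≤ i.val) x y) = G x := by
          intro x y
          have hm : ∀ j : Fin (T + 1), ¬ (τ s < j.val ∧ j.val ≤ s) →
              mixAt (fun j : Fin (T + 1) => τ i.val < j.val ∧ j.val ≤ i.val) x y j = x j := by
            intro j hj
            exact if_neg hj
          simp only [G]
          congr 1
          · apply hc
            intro j hj
            apply hm
            rintro ⟨h1, h2⟩
            have := hfalse _ h1 h2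
            rcases hj with hj | hj
            · rw [hj.2] at this; exact absurd this (by simp)
            · omega
          · refine Finset.prod_congr rfl fun k hk => ?_
            by_cases hks : k.val < s
            · simp [hks]
            · have hne : k.val ≠ s := fun h => (Finset.ne_of_mem_erase hk) (Fin.ext h)
              rw [if_neg hks, if_neg hks]
              have hk' := hτ k.val (by have := k.isLt; omega)
              simp only [V]
              rw [hm ⟨τ k.val, hτT k⟩, hm ⟨k.val, hiT k⟩, hm ⟨k.val + 1, hsT k⟩]
              · rintro ⟨h1, h2⟩
                simp only at h2
                omega
              · rintro ⟨h1, h2⟩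
                simp only at h2
                omega
              · rintro ⟨h1, h2⟩
                have := hfalse _ h1 h2
                rw [hk'.2.1] at this
                exact absurd this (by simp)
        have e := step i G hG
        have l1 : ∀ x, G x * V x i (qv i)
            = c x * ∏ k : Fin (t + 1), if k.val < s then r k else V x k (qv k) := by
          intro x
          rw [← Finset.prod_erase_mul Finset.univ _ (Finset.mem_univ i)]
          simp [G, i, mul_assoc]
        have l2 : ∀ x, G x * r i
            = c x * ∏ k : Fin (t + 1), if k.val < s + 1 then r k else V x k (qv k) := by
          intro x
          rw [← Finset.prod_erase_mul Finset.univ _ (Finset.mem_univ i)]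
          have : ∏ k ∈ Finset.univ.erase i, (if k.val < s + 1 then r k else V x k (qv k))
              = ∏ k ∈ Finset.univ.erase i, (if k.val < s then r k else V x k (qv k)) := by
            refine Finset.prod_congr rfl fun k hk => ?_
            have hne : k.val ≠ s := fun h => (Finset.ne_of_mem_erase hk) (Fin.ext h)
            have : k.val < s + 1 ↔ k.val < s := by omega
            simp only [this]
          rw [this]
          simp [G, i, mul_assoc]
        simp only [l1, l2] at e
        exact e
    rw [hyb (t + 1) le_rfl]
    refine Finset.sum_congr rfl fun x _ => ?_
    rw [Finset.prod_congr rfl (fun i _ => if_pos i.isLt)]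
  classical
  let c : (Fin (T + 1) → N) → ℝ := fun x =>
    if (∀ j : Fin (T + 1), ((j.val ≤ t ∧ f j.val = true) ∨ t + 1 ≤ j.val) → x j = xv j)
    then 1 else 0
  have A := main c (by
    intro x y h
    have : (∀ j : Fin (T + 1), ((j.val ≤ t ∧ f j.val = true) ∨ t + 1 ≤ j.val) → x j = xv j) ↔
        (∀ j : Fin (T + 1), ((j.val ≤ t ∧ f j.val = true) ∨ t + 1 ≤ j.val) → y j = xv j) :=
      ⟨fun g j hj => (h j hj) ▸ g j hj, fun g j hj => (h j hj).trans (g j hj)⟩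
    simp only [c, this])
  have B := main (fun _ => 1) (fun _ _ _ => rfl)
  have D := step 0 (fun _ => 1) (fun _ _ => rfl)
  have D' : r 0 = (∑ x, p x) * r 0 := by
    rw [Finset.sum_mul]
    simpa [r] using D
  have D2 : (∑ x, p x) * ∏ i, r i = ∏ i, r i := by
    rw [← Finset.mul_prod_erase Finset.univ r (Finset.mem_univ 0), ← mul_assoc, ← D']
  have R1 : (∑ x : Fin (T + 1) → N, ∑ q : (∀ j, Q j),
        if (∀ j : Fin (T + 1), ((j.val ≤ t ∧ f j.val = true) ∨ t + 1 ≤ j.val) → x j = xv j)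
            ∧ q = qv
        then Pr x q else 0) = ∑ x, p x * (c x * ∏ i, V x i (qv i)) := by
    refine Finset.sum_congr rfl fun x _ => ?_
    by_cases hx : ∀ j : Fin (T + 1),
        ((j.val ≤ t ∧ f j.val = true) ∨ t + 1 ≤ j.val) → x j = xv j
    · have hcx : c x = 1 := if_pos hx
      rw [hcx, one_mul, ← m3]
      refine Finset.sum_congr rfl fun q _ => ?_
      by_cases hq : q = qv
      · rw [if_pos ⟨hx, hq⟩, if_pos hq]
      · rw [if_neg (fun h => hq h.2), if_neg hq]
    · have hcx : c x = 0 := if_neg hx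
      rw [hcx, zero_mul, mul_zero]
      refine Finset.sum_eq_zero fun q _ => ?_
      rw [if_neg (fun h => hx h.1)]
  have R2 : (∑ x : Fin (T + 1) → N, ∑ q : (∀ j, Q j),
        if (∀ j : Fin (T + 1), ((j.val ≤ t ∧ f j.val = true) ∨ t + 1 ≤ j.val) → x j = xv j)
        then Pr x q else 0) = ∑ x, p x * c x := by
    refine Finset.sum_congr rfl fun x _ => ?_
    by_cases hx : ∀ j : Fin (T + 1),
        ((j.val ≤ t ∧ f j.val = true) ∨ t + 1 ≤ j.val) → x j = xv j
    · have hcx : c x = 1 := if_pos hx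
      rw [hcx, mul_one, ← m1]
      exact Finset.sum_congr rfl fun q _ => if_pos hx
    · have hcx : c x = 0 := if_neg hx
      rw [hcx, mul_zero]
      exact Finset.sum_eq_zero fun q _ => if_neg hx
  have R3 : (∑ x : Fin (T + 1) → N, ∑ q : (∀ j, Q j), if q = qv then Pr x q else 0)
      = ∏ i, r i := by
    rw [← D2, Finset.sum_mul]
    simp only [m3]
    simpa using B
  have E1 : ∑ x, p x * (c x * ∏ i, r i) = (∑ x, p x * c x) * ∏ i, r i := by
    rw [Finset.sum_mul]
    exact Finset.sum_congr rfl fun x _ => by ring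
  have fin := R1.trans (A.trans E1)
  rw [← R2, ← R3] at fin
  convert fin using 1
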